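/- The set {ρ_a : 0 ≤ a < p^2} is an 𝔒_0-basis of 𝔒_2, the element ρ generates a normal basis for K_2/K_0, and {Ψ^{(a)} : 0 ≤ a < p^2} is a K_0-basis of the group algebra K_0[G]. -/

import Mathlib

/-- A normalized discrete valuation on a field `K`, recorded as a function
`v : K → ℤ`.  The value of `v` at `0` is irrelevant: all conditions below only
refer to nonzero elements (the convention `v 0 = ∞` being understood). -/
structure IsDiscVal {K : Type*} [Field K] (v : K → ℤ) : Prop where
  map_one : v 1 = 0
  map_mul : ∀ x y : K, x ≠ 0 → y ≠ 0 → v (x * y) = v x + v y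
  min_le_add : ∀ x y : K, x ≠ 0 → y ≠ 0 → x + y ≠ 0 → min (v x) (v y) ≤ v (x + y)
  exists_uniformizer : ∃ π : K, π ≠ 0 ∧ v π = 1

/-- `ValGe v n z` says that `z` has valuation at least `n`, with `v 0 = ∞`. -/
def ValGe {K : Type*} [Field K] (v : K → ℤ) (n : ℤ) (z : K) : Prop := z = 0 ∨ n ≤ v z

namespace ValGe

variable {K : Type*} [Field K] {v : K → ℤ} {n n' : ℤ} {x y : K}

lemma zero : ValGe v n 0 := Or.inl rfl

lemma le (h : ValGe v n x) (hx : x ≠ 0) : n ≤ v x := h.resolve_left hx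

lemma of_le (h : n ≤ v x) : ValGe v n x := Or.inr h

lemma mono (h : ValGe v n x) (hn : n' ≤ n) : ValGe v n' x := h.imp_right hn.trans

lemma add (hv : IsDiscVal v) (hx : ValGe v n x) (hy : ValGe v n y) : ValGe v n (x + y) := by
  by_cases h : x + y = 0
  · exact Or.inl h
  rcases eq_or_ne x 0 with rfl | hx0
  · simpa using hy
  rcases eq_or_ne y 0 with rfl | hy0
  · simpa using hx
  exact Or.inr ((le_min (hx.le hx0) (hy.le hy0)).trans (hv.min_le_add x y hx0 hy0 h))

lemma mul (hv : IsDiscVal v) (hx : ValGe v n x) (hy : ValGe v n' y) :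
    ValGe v (n + n') (x * y) := by
  rcases eq_or_ne x 0 with rfl | hx0
  · simpa using zero
  rcases eq_or_ne y 0 with rfl | hy0
  · simpa using zero
  refine Or.inr ?_
  rw [hv.map_mul x y hx0 hy0]
  exact add_le_add (hx.le hx0) (hy.le hy0)

lemma one (hv : IsDiscVal v) : ValGe v 0 (1 : K) := Or.inr hv.map_one.ge

lemma neg (hv : IsDiscVal v) (hx : ValGe v n x) : ValGe v n (-x) := by
  have h1 : v (-1) = 0 := by
    have := hv.map_mul (-1) (-1) (by simp) (by simp)
    rw [neg_mul_neg, one_mul, hv.map_one] at this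
    omega
  have := (of_le h1.ge).mul hv hx
  simpa using this

lemma sub (hv : IsDiscVal v) (hx : ValGe v n x) (hy : ValGe v n y) : ValGe v n (x - y) := by
  rw [sub_eq_add_neg]
  exact hx.add hv (hy.neg hv)

lemma sum (hv : IsDiscVal v) {ι : Type*} {s : Finset ι} {f : ι → K}
    (h : ∀ i ∈ s, ValGe v n (f i)) : ValGe v n (∑ i ∈ s, f i) :=
  Finset.sum_induction f _ (fun _ _ => add hv) zero h

lemma pow (hv : IsDiscVal v) (hx : ValGe v n x) (k : ℕ) : ValGe v (k * n) (x ^ k) := by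
  induction k with
  | zero => simpa using one hv
  | succ k ih =>
    rw [pow_succ]
    refine (ih.mul hv hx).mono (le_of_eq ?_)
    push_cast
    ring

lemma natCast (hv : IsDiscVal v) (k : ℕ) : ValGe v 0 (k : K) := by
  induction k with
  | zero => simpa using zero
  | succ k ih => simpa using ih.add hv (one hv)

lemma natCast_mul (hv : IsDiscVal v) (k : ℕ) (hx : ValGe v n x) : ValGe v n (k * x) :=
  ((natCast hv k).mul hv hx).mono (by simp)

end ValGe

namespace IsDiscVal

variable {K : Type*} [Field K] {v : K → ℤ} {n : ℤ} {x y : K}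

lemma map_inv (hv : IsDiscVal v) (hx : x ≠ 0) : v x⁻¹ = -v x := by
  have := hv.map_mul x x⁻¹ hx (inv_ne_zero hx)
  rw [mul_inv_cancel₀ hx, hv.map_one] at this
  omega

lemma map_pow (hv : IsDiscVal v) (hx : x ≠ 0) (k : ℕ) : v (x ^ k) = k * v x := by
  induction k with
  | zero => simpa using hv.map_one
  | succ k ih =>
    rw [pow_succ, hv.map_mul _ _ (pow_ne_zero k hx) hx, ih]
    push_cast
    ring

lemma map_zpow (hv : IsDiscVal v) (hx : x ≠ 0) (k : ℤ) : v (x ^ k) = k * v x := by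
  obtain ⟨k, rfl | rfl⟩ := k.eq_nat_or_neg
  · rw [zpow_natCast, hv.map_pow hx]
  · rw [zpow_neg, zpow_natCast, hv.map_inv (pow_ne_zero k hx), hv.map_pow hx]
    ring

lemma valGe_div (hv : IsDiscVal v) (hx : ValGe v n x) (hy : y ≠ 0) :
    ValGe v (n - v y) (x / y) := by
  have : ValGe v (-v y) y⁻¹ := Or.inr (hv.map_inv hy).ge
  rw [div_eq_mul_inv, sub_eq_add_neg]
  exact hx.mul hv this

/-- If `y - x` has strictly larger valuation than `x`, then `v y = v x`. -/
lemma eq_of_valGe_sub (hv : IsDiscVal v) (hx : x ≠ 0) (h : ValGe v (v x + 1) (y - x)) :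
    y ≠ 0 ∧ v y = v x := by
  have hy : y ≠ 0 := by
    rintro rfl
    have := (h.neg hv).le (by simpa using hx)
    simp at this
  refine ⟨hy, le_antisymm ?_ ?_⟩
  · by_contra hlt
    have h1 : ValGe v (v x + 1) y := Or.inr (by omega)
    have := (h1.sub hv h).le (by simpa using hx)
    simp at this
  · have := (h.mono (by omega : v x ≤ v x + 1)).add hv (Or.inr le_rfl : ValGe v (v x) x)
    rw [sub_add_cancel] at this
    exact this.le hy

/-- If the nonzero terms of a sum have distinct valuations, every term has valuation at least that
of the sum. -/
lemma valGe_of_valGe_sum (hv : IsDiscVal v) {ι : Type*} [Fintype ι] {t : ι → K}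
    (ht : ∀ i j, t i ≠ 0 → t j ≠ 0 → v (t i) = v (t j) → i = j)
    (h : ValGe v n (∑ i, t i)) (i : ι) : ValGe v n (t i) := by
  classical
  by_contra hi
  have hi0 : t i ≠ 0 := fun h0 => hi (Or.inl h0)
  obtain ⟨k, hk, hmin⟩ := Finset.exists_min_image (Finset.univ.filter fun j => t j ≠ 0)
    (fun j => v (t j)) ⟨i, by simpa using hi0⟩
  simp only [Finset.mem_filter, Finset.mem_univ, true_and] at hk hmin
  have hkn : v (t k) < n := lt_of_le_of_lt (hmin i hi0) (not_le.1 fun h' => hi (Or.inr h'))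
  have hrest : ValGe v (v (t k) + 1) (∑ j ∈ Finset.univ.erase k, t j) := by
    refine ValGe.sum hv fun j hj => ?_
    by_cases hj0 : t j = 0
    · exact Or.inl hj0
    · refine Or.inr (lt_of_le_of_ne (hmin j hj0) fun he => ?_)
      exact (Finset.ne_of_mem_erase hj) (ht j k hj0 hk he.symm)
  have hsum := Finset.add_sum_erase Finset.univ t (Finset.mem_univ k)
  have := ((h.mono (by omega : v (t k) + 1 ≤ n)).sub hv hrest)
  rw [← hsum, add_sub_cancel_right] at this
  have := this.le hk
  omega

/-- A natural number prime to the residue characteristic is a unit. -/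
lemma map_natCast_eq_zero (hv : IsDiscVal v) {p : ℕ} (hp : ValGe v 1 (p : K)) {k : ℕ}
    (hk : k.Coprime p) : (k : K) ≠ 0 ∧ v (k : K) = 0 := by
  have key : ¬ ValGe v 1 (k : K) := by
    intro h
    have hbez : (1 : K) = k * (k.gcdA p : ℤ) + p * (k.gcdB p : ℤ) := by
      have := Nat.gcd_eq_gcd_ab k p
      rw [hk] at this
      exact_mod_cast congrArg (Int.cast : ℤ → K) this
    have hinteger : ∀ z : ℤ, ValGe v 0 (z : K) := by
      intro z
      obtain ⟨l, rfl | rfl⟩ := z.eq_nat_or_neg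
      · simpa using ValGe.natCast hv l
      · simpa using (ValGe.natCast hv l).neg hv
    have : ValGe v 1 (1 : K) := by
      rw [hbez]
      exact ((h.mul hv (hinteger _)).add hv (hp.mul hv (hinteger _))).mono (by simp)
    have := this.le one_ne_zero
    rw [hv.map_one] at this
    omega
  have h0 : (k : K) ≠ 0 := fun h => key (Or.inl h)
  refine ⟨h0, le_antisymm ?_ ((ValGe.natCast hv k).le h0)⟩
  by_contra h
  exact key (Or.inr (by omega))

/-- Valuation estimate for the cross terms of `(x + y) ^ p`. -/
lemma exists_add_pow_prime_eq (hv : IsDiscVal v) {p : ℕ} (hp : p.Prime) {r s : ℤ}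
    (hx : ValGe v r x) (hy : ValGe v s y) :
    ∃ w, (x + y) ^ p = x ^ p + y ^ p + p * w ∧
      ∀ n : ℤ, n ≤ r + (p - 1) * s → n ≤ (p - 1) * r + s → ValGe v n w := by
  refine ⟨_, (add_pow_prime_eq hp x y).trans (by rw [mul_assoc (p : K), mul_assoc (p : K)]), ?_⟩
  intro n h1 h2
  rw [Finset.mul_sum]
  refine ValGe.sum hv fun k hk => ?_
  obtain ⟨hk0, hkp⟩ := Finset.mem_Ioo.1 hk
  obtain ⟨i, rfl⟩ : ∃ i, k = i + 1 := ⟨k - 1, by omega⟩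
  obtain ⟨j, hj⟩ : ∃ j, p = i + 1 + (j + 1) := ⟨p - (i + 1) - 1, by omega⟩
  have e1 : i + 1 - 1 = i := rfl
  have e2 : p - (i + 1) - 1 = j := by omega
  rw [e1, e2]
  refine ((hx.mul hv hy).mul hv
    (((hx.pow hv i).mul hv (hy.pow hv j)).mul hv (ValGe.natCast hv _))).mono ?_
  have hpc : (p : ℤ) = i + 1 + (j + 1) := by exact_mod_cast hj
  rw [hpc] at h1 h2
  rcases le_total r s with h | h
  · nlinarith [mul_nonneg (Int.natCast_nonneg j) (sub_nonneg.2 h)]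
  · nlinarith [mul_nonneg (Int.natCast_nonneg i) (sub_nonneg.2 h)]

/-- The valuation of a root of an Artin–Schreier polynomial with a pole. -/
lemma val_root (hv : IsDiscVal v) {p : ℕ} (hp : p.Prime) {A : K} (hA : A ≠ 0)
    (hn : n < 0) (hAv : v A = p * n) (hx : x ^ p - x = A) : x ≠ 0 ∧ v x = n := by
  have hp2 : (2 : ℤ) ≤ p := by exact_mod_cast hp.two_le
  have hx0 : x ≠ 0 := by
    rintro rfl
    rw [zero_pow hp.ne_zero, sub_zero] at hx
    exact hA hx.symm
  have hxx : ValGe v (v x) x := Or.inr le_rfl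
  have hneg : v x < 0 := by
    by_contra h
    have h1 : ValGe v 0 A := by
      rw [← hx]
      exact ((hxx.pow hv p).mono (by nlinarith)).sub hv (hxx.mono (by omega))
    have := h1.le hA
    nlinarith
  have hpow := hv.map_pow hx0 p
  have := (hv.eq_of_valGe_sub (y := A) (pow_ne_zero p hx0) (by
    rw [← hx, sub_sub_cancel_left, hpow]
    exact (hxx.neg hv).mono (by nlinarith))).2
  rw [hAv, hpow] at this
  exact ⟨hx0, (mul_left_cancel₀ (by omega) this).symm⟩

end IsDiscVal

/-- The falling factorial `x (x - 1) ⋯ (x - n + 1)`. -/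
def fallFact {K : Type*} [Field K] (x : K) (n : ℕ) : K := ∏ k ∈ Finset.range n, (x - (k : K))

section fallFact

variable {K : Type*} [Field K] {v : K → ℤ} {x y : K}

lemma fallFact_zero (x : K) : fallFact x 0 = 1 := rfl

lemma fallFact_succ (x : K) (n : ℕ) : fallFact x (n + 1) = fallFact x n * (x - n) :=
  Finset.prod_range_succ _ _

lemma fallFact_add_one (x : K) (n : ℕ) :
    fallFact (x + 1) (n + 1) = fallFact x (n + 1) + (n + 1) * fallFact x n := by
  have h : fallFact (x + 1) (n + 1) = (x + 1) * fallFact x n := by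
    rw [fallFact, fallFact, Finset.prod_range_succ', mul_comm]
    simp
  rw [h, fallFact_succ]
  ring

/-- The Chu–Vandermonde identity. -/
lemma fallFact_add (x y : K) (n : ℕ) :
    fallFact (x + y) n =
      ∑ ij ∈ Finset.HasAntidiagonal.antidiagonal n,
        (n.choose ij.1 : K) * (fallFact y ij.1 * fallFact x ij.2) := by
  induction n with
  | zero => simp [fallFact_zero]
  | succ n ih =>
    rw [Finset.sum_antidiagonal_choose_succ_mul (fun i j => fallFact y i * fallFact x j),
      ← Finset.sum_add_distrib, fallFact_succ, ih, Finset.sum_mul]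
    refine Finset.sum_congr rfl fun ij hij => ?_
    have hn := Finset.HasAntidiagonal.mem_antidiagonal.1 hij
    have hc : n.choose ij.2 = n.choose ij.1 := (Nat.choose_symm_of_eq_add (by omega)).symm
    rw [hc, fallFact_succ, fallFact_succ, ← hn]
    push_cast
    ring

lemma fallFact_add_eq_sum_range (x y : K) {n p : ℕ} (hn : n < p) :
    fallFact (x + y) n =
      ∑ i ∈ Finset.range p, (n.choose i : K) * (fallFact y i * fallFact x (n - i)) := by
  rw [fallFact_add, Finset.Nat.sum_antidiagonal_eq_sum_range_succ
    (fun i j => (n.choose i : K) * (fallFact y i * fallFact x j))]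
  refine Finset.sum_subset (Finset.range_mono hn) fun i _ hi => ?_
  rw [Nat.choose_eq_zero_of_lt (by simpa using hi)]
  simp

lemma algebraMap_fallFact {L : Type*} [Field L] [Algebra K L] (x : K) (n : ℕ) :
    algebraMap K L (fallFact x n) = fallFact (algebraMap K L x) n := by
  simp [fallFact, map_prod]

lemma map_fallFact {F L : Type*} [Field F] [Field L] [Algebra F K] [Algebra F L]
    (f : K →ₐ[F] L) (x : K) (n : ℕ) : f (fallFact x n) = fallFact (f x) n := by
  simp [fallFact, map_prod]

lemma valGe_sub_natCast (hv : IsDiscVal v) {r : ℤ} (hx : ValGe v r x) (hr : r ≤ 0) (n : ℕ) :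
    ValGe v r (x - n) := hx.sub hv ((ValGe.natCast hv n).mono hr)

lemma valGe_fallFact (hv : IsDiscVal v) {r : ℤ} (hx : ValGe v r x) (hr : r ≤ 0) (n : ℕ) :
    ValGe v (n * r) (fallFact x n) := by
  induction n with
  | zero => simpa [fallFact_zero] using ValGe.one hv
  | succ n ih =>
    rw [fallFact_succ]
    refine (ih.mul hv (valGe_sub_natCast hv hx hr n)).mono (le_of_eq ?_)
    push_cast
    ring

lemma val_fallFact (hv : IsDiscVal v) (hx : x ≠ 0) (hr : v x < 0) (n : ℕ) :
    fallFact x n ≠ 0 ∧ v (fallFact x n) = n * v x := by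
  induction n with
  | zero => simpa [fallFact_zero] using hv.map_one
  | succ n ih =>
    obtain ⟨h0, h1⟩ := hv.eq_of_valGe_sub (y := x - n) hx (by
      rw [sub_sub_cancel_left]
      exact ((ValGe.natCast hv n).neg hv).mono (by omega))
    rw [fallFact_succ]
    refine ⟨mul_ne_zero ih.1 h0, ?_⟩
    rw [hv.map_mul _ _ ih.1 h0, ih.2, h1]
    push_cast
    ring

lemma valGe_fallFact_add_sub (hv : IsDiscVal v) {r t : ℤ} (hx : ValGe v r x) (hy : ValGe v t y)
    (hr : r ≤ 0) (hrt : r ≤ t) (n : ℕ) :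
    ValGe v (t - r + n * r) (fallFact (x + y) n - fallFact x n) := by
  induction n with
  | zero => simpa [fallFact_zero] using ValGe.zero
  | succ n ih =>
    have h : fallFact (x + y) (n + 1) - fallFact x (n + 1) =
        (fallFact (x + y) n - fallFact x n) * (x + y - n) + fallFact x n * y := by
      rw [fallFact_succ, fallFact_succ]
      ring
    rw [h]
    refine ((ih.mul hv (valGe_sub_natCast hv (hx.add hv (hy.mono hrt)) hr n)).mono ?_).add hv
      (((valGe_fallFact hv hx hr n).mul hv hy).mono ?_)
    all_goals push_cast; linarith

end fallFact

section family

variable {F K : Type*} [Field F] [Field K] [Algebra F K] {v0 : F → ℤ} {v : K → ℤ} {N : ℤ}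
  {ι : Type*} [Fintype ι] {f : ι → K}

/-- In a sum over elements with valuations distinct modulo the ramification index, every term has
valuation at least that of the sum. -/
lemma valGe_smul_of_valGe_sum (hv : IsDiscVal v)
    (hram : ∀ x : F, x ≠ 0 → v (algebraMap F K x) = N * v0 x)
    (hf : ∀ i, f i ≠ 0) (hdist : ∀ i j, N ∣ v (f i) - v (f j) → i = j) {n : ℤ} {c : ι → F}
    (h : ValGe v n (∑ i, c i • f i)) (i : ι) : ValGe v n (c i • f i) := by
  refine hv.valGe_of_valGe_sum (fun i j hi hj he => hdist i j ?_) h i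
  have hval : ∀ k, c k • f k ≠ 0 → v (c k • f k) = N * v0 (c k) + v (f k) := by
    intro k hk
    have hck : c k ≠ 0 := fun h0 => hk (by rw [h0, zero_smul])
    rw [Algebra.smul_def, hv.map_mul _ _ (by simpa using hck) (hf k), hram _ hck]
  rw [hval i hi, hval j hj] at he
  exact ⟨v0 (c j) - v0 (c i), by linear_combination he⟩

lemma linearIndependent_of_val_distinct (hv : IsDiscVal v)
    (hram : ∀ x : F, x ≠ 0 → v (algebraMap F K x) = N * v0 x)
    (hf : ∀ i, f i ≠ 0) (hdist : ∀ i j, N ∣ v (f i) - v (f j) → i = j) :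
    LinearIndependent F f := by
  rw [Fintype.linearIndependent_iff]
  intro c hc i
  by_contra hi
  have h0 : c i • f i ≠ 0 := smul_ne_zero hi (hf i)
  have := (valGe_smul_of_valGe_sum (n := v (c i • f i) + 1) hv hram hf hdist
    (by rw [hc]; exact ValGe.zero) i).le h0
  omega

lemma exists_eq_sum_smul_of_val_distinct [FiniteDimensional F K] (hv : IsDiscVal v)
    (hram : ∀ x : F, x ≠ 0 → v (algebraMap F K x) = N * v0 x)
    (hf : ∀ i, f i ≠ 0) (hdist : ∀ i j, N ∣ v (f i) - v (f j) → i = j)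
    (hcard : Fintype.card ι = Module.finrank F K) (z : K) : ∃ c : ι → F, z = ∑ i, c i • f i := by
  have hli := linearIndependent_of_val_distinct hv hram hf hdist
  have hz : z ∈ Submodule.span F (Set.range f) := by
    rw [hli.span_eq_top_of_card_eq_finrank' hcard]
    trivial
  obtain ⟨c, hc⟩ := (Submodule.mem_span_range_iff_exists_fun F).1 hz
  exact ⟨c, hc.symm⟩

/-- A linear map that raises the valuation of the members of such a family by at least `c` raises
all valuations by at least `c`. -/
lemma valGe_map_of_val_distinct [FiniteDimensional F K] (hv : IsDiscVal v)
    (hram : ∀ x : F, x ≠ 0 → v (algebraMap F K x) = N * v0 x)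
    (hf : ∀ i, f i ≠ 0) (hdist : ∀ i j, N ∣ v (f i) - v (f j) → i = j)
    (hcard : Fintype.card ι = Module.finrank F K) {φ : Module.End F K} {c : ℤ}
    (hφ : ∀ i, ValGe v (v (f i) + c) (φ (f i))) {n : ℤ} {z : K} (hz : ValGe v n z) :
    ValGe v (n + c) (φ z) := by
  obtain ⟨a, rfl⟩ := exists_eq_sum_smul_of_val_distinct hv hram hf hdist hcard z
  rw [map_sum]
  refine ValGe.sum hv fun i _ => ?_
  have hi := valGe_smul_of_valGe_sum hv hram hf hdist hz i
  rw [map_smul]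
  by_cases ha : a i = 0
  · rw [ha, zero_smul]
    exact ValGe.zero
  have ha' : algebraMap F K (a i) ≠ 0 := by simpa using ha
  have hle := hi.le (smul_ne_zero ha (hf i))
  rw [Algebra.smul_def] at hle ⊢
  rw [hv.map_mul _ _ ha' (hf i)] at hle
  exact ((ValGe.of_le le_rfl).mul hv (hφ i)).mono (by omega)

/-- A family of the right size with valuations `0, …, N - 1` in some order is an integral basis. -/
lemma valGe_zero_iff_exists_integral_coeff [FiniteDimensional F K] (hv : IsDiscVal v)
    (hram : ∀ x : F, x ≠ 0 → v (algebraMap F K x) = N * v0 x)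
    (hf : ∀ i, f i ≠ 0) (hdist : ∀ i j, N ∣ v (f i) - v (f j) → i = j)
    (hcard : Fintype.card ι = Module.finrank F K)
    (hN : ∀ i, 0 ≤ v (f i) ∧ v (f i) < N) (z : K) :
    ValGe v 0 z ↔ ∃ c : ι → F, (∀ i, ValGe v0 0 (c i)) ∧ z = ∑ i, algebraMap F K (c i) * f i := by
  simp only [← Algebra.smul_def]
  constructor
  · intro hz
    obtain ⟨a, rfl⟩ := exists_eq_sum_smul_of_val_distinct hv hram hf hdist hcard z
    refine ⟨a, fun i => ?_, rfl⟩
    by_cases ha : a i = 0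
    · exact Or.inl ha
    have hle := (valGe_smul_of_valGe_sum hv hram hf hdist hz i).le (smul_ne_zero ha (hf i))
    rw [Algebra.smul_def, hv.map_mul _ _ (by simpa using ha) (hf i), hram _ ha] at hle
    refine Or.inr ?_
    by_contra h
    nlinarith [hN i]
  · rintro ⟨a, ha, rfl⟩
    refine ValGe.sum hv fun i _ => ?_
    by_cases h0 : a i = 0
    · rw [h0, zero_smul]
      exact ValGe.zero
    have h1 := (ha i).le h0
    rw [Algebra.smul_def]
    refine (ValGe.mul hv (ValGe.of_le (hram _ h0).ge) (ValGe.of_le (hN i).1)).mono ?_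
    nlinarith [hN i]

end family

/-- Iterates of an operator acting on a sequence like a derivative, up to higher order terms. -/
lemma valGe_iterate_sub_descFactorial {F K : Type*} [Field F] [Field K] [Algebra F K] {v : K → ℤ}
    (hv : IsDiscVal v) {φ : Module.End F K} {c e w : ℤ} {g : ℕ → K}
    (hφ : ∀ n z, ValGe v n z → ValGe v (n + c) (φ z))
    (hzero : ValGe v (w + c + e) (φ (g 0)))
    (hsucc : ∀ k : ℕ, ValGe v (w - k * c + e) (φ (g (k + 1)) - (k + 1) * g k)) (n i : ℕ) :
    ValGe v (w - n * c + i * c + e) ((φ ^ i) (g n) - n.descFactorial i * g (n - i)) := by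
  induction i with
  | zero => simpa using ValGe.zero
  | succ i ih =>
    have hsplit : (φ ^ (i + 1)) (g n) - n.descFactorial (i + 1) * g (n - (i + 1)) =
        φ ((φ ^ i) (g n) - n.descFactorial i * g (n - i)) +
          n.descFactorial i * (φ (g (n - i)) - (n - i : ℕ) * g (n - (i + 1))) := by
      have hnat : ∀ z, φ ((n.descFactorial i : K) * z) = n.descFactorial i * φ z := by
        intro z
        simpa [nsmul_eq_mul] using map_nsmul φ (n.descFactorial i) z
      rw [pow_succ', Module.End.mul_apply, map_sub, hnat, Nat.descFactorial_succ]
      push_cast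
      ring
    rw [hsplit]
    refine ((hφ _ _ ih).mono (by push_cast; linarith)).add hv ?_
    rcases Nat.lt_or_ge n i with hlt | hle
    · rw [Nat.descFactorial_of_lt hlt]
      simpa using ValGe.zero
    refine ValGe.natCast_mul hv _ ?_
    obtain ⟨k, rfl⟩ := Nat.exists_eq_add_of_le hle
    rcases k with _ | k
    · simpa using hzero.mono (by linarith)
    · have h1 : i + (k + 1) - i = k + 1 := by omega
      have h2 : i + (k + 1) - (i + 1) = k := by omega
      rw [h1, h2]
      push_cast
      exact (hsucc k).mono (by linarith)

lemma eq_and_eq_of_sq_dvd {p : ℕ} (hp : p.Prime) {b1 b2 m : ℤ} (hb1 : ¬ (p : ℤ) ∣ b1)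
    (hb2 : b2 = (p : ℤ) ^ 2 * m + b1) {i j i' j' : ℕ} (hi : i < p) (hj : j < p) (hi' : i' < p)
    (hj' : j' < p)
    (h : (p : ℤ) ^ 2 ∣ (j * b2 + i * p * b1) - (j' * b2 + i' * p * b1)) : i = i' ∧ j = j' := by
  have h1 : (p : ℤ) ^ 2 ∣ b1 * (((i : ℤ) - i') * p + (j - j')) := by
    have := dvd_sub h (dvd_mul_right ((p : ℤ) ^ 2) (m * ((j : ℤ) - j')))
    have e : b1 * (((i : ℤ) - i') * p + (j - j')) =
        (j * b2 + i * p * b1) - (j' * b2 + i' * p * b1) - (p : ℤ) ^ 2 * (m * ((j : ℤ) - j')) := by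
      rw [hb2]
      ring
    rwa [e]
  have hcop : IsCoprime ((p : ℤ) ^ 2) b1 :=
    ((Nat.prime_iff_prime_int.1 hp).coprime_iff_not_dvd.2 hb1).pow_left
  obtain ⟨t, ht⟩ := hcop.dvd_of_dvd_mul_left h1
  have hpz : (0 : ℤ) < p := by exact_mod_cast hp.pos
  have hjj : (j : ℤ) - j' = 0 := by
    refine Int.eq_zero_of_abs_lt_dvd (m := p) ⟨p * t - (i - i'), by linear_combination ht⟩ ?_
    rw [abs_lt]
    constructor <;> omega
  have hii : (i : ℤ) - i' = 0 := by
    refine Int.eq_zero_of_abs_lt_dvd (m := p) ⟨t, ?_⟩ ?_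
    · refine mul_right_cancel₀ hpz.ne' ?_
      linear_combination ht - hjj
    · rw [abs_lt]
      constructor <;> omega
  omega

section field

variable {K : Type*} [Field K] {v : K → ℤ} {p : ℕ} {E b1 m : ℤ} {x1 : K}

/-- Integrality of `(x ^ p + y ^ p - (x + y) ^ p) / p` as a polynomial in `x` and `y`. -/
lemma valGe_witt_cocycle (hv : IsDiscVal v) (hp : p.Prime) (hp0 : (p : K) ≠ 0) {x y : K}
    {r s n : ℤ} (hx : ValGe v r x) (hy : ValGe v s y) (h1 : n ≤ r + (p - 1) * s)
    (h2 : n ≤ (p - 1) * r + s) : ValGe v n ((x ^ p + y ^ p - (x + y) ^ p) / p) := by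
  obtain ⟨w, hw, hwv⟩ := hv.exists_add_pow_prime_eq hp hx hy
  have : (x ^ p + y ^ p - (x + y) ^ p) / p = -w := by
    rw [hw]
    field_simp
    ring
  rw [this]
  exact (hwv n h1 h2).neg hv

/-- The valuation of `x2 - μ x1`. -/
lemma val_reduced_generator (hv : IsDiscVal v) (hp : p.Prime) (hp0 : (p : K) ≠ 0)
    (hpE : ValGe v E (p : K)) (hb1 : 0 < b1) (hm : 0 < m)
    (hE : p * ((p : ℤ) ^ 2 - 1) * b1 < E) (hbm : ((p : ℤ) ^ 2 - 1) * b1 < (p : ℤ) ^ 2 * m)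
    {A M x2 : K} (hx0 : x1 ≠ 0) (hx1v : v x1 = -(p * b1)) (hAv : ValGe v (-((p : ℤ) ^ 2 * b1)) A)
    (hx1 : x1 ^ p - x1 = A) (hM0 : M ≠ 0) (hMv : v M = -((p : ℤ) ^ 2 * m))
    (hx2 : x2 ^ p - x2 = M ^ p * A + (x1 ^ p + A ^ p - (x1 + A) ^ p) / (p : K)) :
    x2 - M * x1 ≠ 0 ∧ v (x2 - M * x1) = -((p : ℤ) ^ 2 * m + b1) := by
  have hp2 : (2 : ℤ) ≤ p := by exact_mod_cast hp.two_le
  set X := x2 - M * x1 with hX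
  have hx1g : ValGe v (-(p * b1)) x1 := ValGe.of_le hx1v.ge
  have hMx : v (M * x1) = -((p : ℤ) ^ 2 * m) - p * b1 := by
    rw [hv.map_mul _ _ hM0 hx0, hMv, hx1v]
    ring
  have hMxg : ValGe v (-((p : ℤ) ^ 2 * m) - p * b1) (M * x1) := ValGe.of_le hMx.ge
  have hlead0 : M ^ p * x1 ≠ 0 := mul_ne_zero (pow_ne_zero p hM0) hx0
  have hlead : v (M ^ p * x1) = p * -((p : ℤ) ^ 2 * m + b1) := by
    rw [hv.map_mul _ _ (pow_ne_zero p hM0) hx0, hv.map_pow hM0, hMv, hx1v]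
    ring
  have hbm' : 0 < (p : ℤ) ^ 2 * m := by positivity
  have key : ∀ N : ℤ, N ≤ -((p : ℤ) ^ 2 * m + b1) → ValGe v N X →
      ValGe v (p * N + 1) (X ^ p + M ^ p * x1) := by
    intro N hN hXN
    obtain ⟨w, hw, hwv⟩ := hv.exists_add_pow_prime_eq hp hXN hMxg
    have hsum : X + M * x1 = x2 := by rw [hX]; ring
    have heq : X ^ p + M ^ p * x1 =
        X + M * x1 + (x1 ^ p + A ^ p - (x1 + A) ^ p) / (p : K) - p * w := by
      rw [hsum, mul_pow] at hw
      linear_combination -hw + hx2 - M ^ p * hx1 - hsum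
    have hpN : p * N ≤ 2 * N := by nlinarith
    rw [heq]
    refine (((hXN.mono (by linarith)).add hv (hMxg.mono ?_)).add hv
      (valGe_witt_cocycle hv hp hp0 hx1g hAv ?_ ?_)).sub hv
      ((hpE.mul hv (hwv (p * N - (p - 1) * ((p - 1) * b1)) ?_ ?_)).mono ?_)
    · nlinarith
    · nlinarith
    · nlinarith [mul_nonneg (by linarith : (0 : ℤ) ≤ p - 1) hb1.le]
    · nlinarith
    · nlinarith [mul_nonneg (by linarith : (0 : ℤ) ≤ p - 1) hb1.le]
    · nlinarith [mul_nonneg (by linarith : (0 : ℤ) ≤ p - 1) hb1.le]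
  have hX0 : X ≠ 0 := by
    intro h0
    have := key _ le_rfl (Or.inl h0)
    rw [h0, zero_pow hp.ne_zero, zero_add] at this
    have := this.le hlead0
    omega
  have hXp := hv.map_pow hX0 p
  refine ⟨hX0, ?_⟩
  rcases lt_trichotomy (v X) (-((p : ℤ) ^ 2 * m + b1)) with hlt | heq | hgt
  · have h1 := key _ hlt.le (ValGe.of_le le_rfl)
    have h2 : ValGe v (p * v X + 1) (M ^ p * x1) := ValGe.of_le (by rw [hlead]; nlinarith)
    have h3 := (h1.sub hv h2).le (by simpa using pow_ne_zero p hX0)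
    rw [add_sub_cancel_right, hXp] at h3
    omega
  · exact heq
  · have h1 := key _ le_rfl (ValGe.of_le hgt.le)
    have h2 : ValGe v (p * -((p : ℤ) ^ 2 * m + b1) + 1) (X ^ p) :=
      ValGe.of_le (by rw [hXp]; nlinarith)
    have h3 := (h1.sub hv h2).le (by simpa using hlead0)
    rw [add_sub_cancel_left, hlead] at h3
    omega

/-- Roots of an Artin–Schreier polynomial that are close to each other agree. -/
lemma eq_of_pow_sub_self_eq (hv : IsDiscVal v) (hp : p.Prime)
    (hpE : ValGe v E (p : K)) (hb1 : 0 < b1) (hE : p * ((p : ℤ) ^ 2 - 1) * b1 < E)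
    (hx1g : ValGe v (-(p * b1)) x1) {y : K} (hy : y ^ p - y = x1 ^ p - x1)
    (hyx : ValGe v 1 (y - x1)) : y = x1 := by
  have hp2 : (2 : ℤ) ≤ p := by exact_mod_cast hp.two_le
  rw [← sub_eq_zero]
  by_contra h0
  set h := y - x1 with hh
  have hpos : 1 ≤ v h := hyx.le h0
  obtain ⟨w, hw, hwv⟩ := hv.exists_add_pow_prime_eq hp hx1g (ValGe.of_le (le_refl (v h)))
  have heq : h = h ^ p + p * w := by
    have e : x1 + h = y := by rw [hh]; ring
    rw [e] at hw
    linear_combination -hy + hw - hh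
  have hb : 0 < p * b1 := by positivity
  have : ValGe v (v h + 1) h := by
    nth_rw 2 [heq]
    refine (((ValGe.of_le le_rfl).pow hv p).mono ?_).add hv
      ((hpE.mul hv (hwv (v h - (p - 1) * (p * b1)) ?_ ?_)).mono ?_)
    · nlinarith
    · nlinarith
    · nlinarith
    · nlinarith [mul_nonneg (by linarith : (0 : ℤ) ≤ p - 1) hb.le]
  have := this.le h0
  omega

end field

section extension

variable {F K : Type*} [Field F] [Field K] [Algebra F K] {v0 : F → ℤ} {v : K → ℤ}
  {p : ℕ} {E b1 b2 m : ℤ} {x1 X : K}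

/-- The monomials `x1 ^ i * X (X - 1) ⋯ (X - j + 1)`. -/
def scaffoldMonomial (x1 X : K) (i j : ℕ) : K := x1 ^ i * fallFact X j

lemma val_scaffoldMonomial (hv : IsDiscVal v) (hx0 : x1 ≠ 0) (hx1v : v x1 = -(p * b1))
    (hX0 : X ≠ 0) (hXv : v X = -b2) (hb2 : 0 < b2) (i j : ℕ) :
    scaffoldMonomial x1 X i j ≠ 0 ∧
      v (scaffoldMonomial x1 X i j) = -(j * b2 + i * p * b1) := by
  obtain ⟨h0, h1⟩ := val_fallFact hv hX0 (by omega) j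
  refine ⟨mul_ne_zero (pow_ne_zero i hx0) h0, ?_⟩
  rw [scaffoldMonomial, hv.map_mul _ _ (pow_ne_zero i hx0) h0, hv.map_pow hx0, h1, hx1v, hXv]
  ring

lemma scaffoldMonomial_val_distinct (hv : IsDiscVal v) (hp : p.Prime) (hb1 : ¬ (p : ℤ) ∣ b1)
    (hb2 : b2 = (p : ℤ) ^ 2 * m + b1) (hx0 : x1 ≠ 0) (hx1v : v x1 = -(p * b1))
    (hX0 : X ≠ 0) (hXv : v X = -b2) (hb2pos : 0 < b2) (s t : Fin p × Fin p)
    (h : (p : ℤ) ^ 2 ∣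
      v (scaffoldMonomial x1 X s.1 s.2) - v (scaffoldMonomial x1 X t.1 t.2)) : s = t := by
  rw [(val_scaffoldMonomial hv hx0 hx1v hX0 hXv hb2pos _ _).2,
    (val_scaffoldMonomial hv hx0 hx1v hX0 hXv hb2pos _ _).2, ← dvd_neg, neg_sub_neg, neg_sub] at h
  have := eq_and_eq_of_sq_dvd hp hb1 hb2 s.1.2 s.2.2 t.1.2 t.2.2 h
  exact Prod.ext (Fin.ext this.1) (Fin.ext this.2)

lemma valGe_map_mul_sub (hv : IsDiscVal v) (σ : K ≃ₐ[F] K) {c n n' : ℤ} {y z : K} (hc : 0 ≤ c)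
    (hy : ValGe v n y) (hz : ValGe v n' z) (hσy : ValGe v (n + c) (σ y - y))
    (hσz : ValGe v (n' + c) (σ z - z)) : ValGe v (n + n' + c) (σ (y * z) - y * z) := by
  have h : σ (y * z) - y * z = (σ y - y) * (σ z - z + z) + y * (σ z - z) := by
    rw [map_mul]
    ring
  rw [h]
  exact ((hσy.mul hv ((hσz.mono (by omega)).add hv hz)).mono (by omega)).add hv
    ((hy.mul hv hσz).mono (by omega))

lemma valGe_map_scaffoldMonomial_sub (hv : IsDiscVal v) (σ : K ≃ₐ[F] K) {c r s : ℤ} (hc : 0 ≤ c)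
    (hs : s ≤ 0) (hx : ValGe v r x1) (hX : ValGe v s X) (hσx : ValGe v (r + c) (σ x1 - x1))
    (hσX : ValGe v (s + c) (σ X - X)) (i j : ℕ) :
    ValGe v (i * r + j * s + c)
      (σ (scaffoldMonomial x1 X i j) - scaffoldMonomial x1 X i j) := by
  have h1 : ValGe v (i * r + c) (σ (x1 ^ i) - x1 ^ i) := by
    induction i with
    | zero => simpa using ValGe.zero
    | succ i ih =>
      rw [pow_succ]
      refine (valGe_map_mul_sub hv σ hc (hx.pow hv i) hx ih hσx).mono (le_of_eq ?_)
      push_cast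
      ring
  have h2 : ValGe v (j * s + c) (σ (fallFact X j) - fallFact X j) := by
    induction j with
    | zero => simpa [fallFact_zero] using ValGe.zero
    | succ j ih =>
      rw [fallFact_succ]
      refine (valGe_map_mul_sub hv σ hc (valGe_fallFact hv hX hs j)
        (valGe_sub_natCast hv hX hs j) ih (by simpa using hσX)).mono (le_of_eq ?_)
      push_cast
      ring
  exact valGe_map_mul_sub hv σ hc (hx.pow hv i) (valGe_fallFact hv hX hs j) h1 h2

lemma valGe_pow_apply (hv : IsDiscVal v) (σ : K ≃ₐ[F] K) {c : ℤ} (hc : 0 ≤ c)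
    (hσ : ∀ n z, ValGe v n z → ValGe v (n + c) (σ z - z)) {n : ℤ} {z : K} (hz : ValGe v n z)
    (j : ℕ) : ValGe v n ((σ ^ j) z) := by
  induction j with
  | zero => simpa using hz
  | succ j ih =>
    rw [pow_succ', AlgEquiv.mul_apply]
    simpa using ((hσ _ _ ih).mono (by omega)).add hv ih

/-- The relation `∑ σ ^ j = ∑ (p choose k + 1) (σ - 1) ^ k` gives a bound for partial traces. -/
lemma valGe_sum_pow_apply (hv : IsDiscVal v) (hp : p.Prime) (hpE : ValGe v E (p : K))
    (σ : K ≃ₐ[F] K) {c : ℤ} (hc : 0 ≤ c) (hcE : (p - 1) * c ≤ E)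
    (hσ : ∀ n z, ValGe v n z → ValGe v (n + c) (σ z - z)) {n : ℤ} {z : K} (hz : ValGe v n z) :
    ValGe v (n + (p - 1) * c) (∑ j ∈ Finset.range p, (σ ^ j) z) := by
  set Y : Module.End F K := σ.toLinearMap - 1 with hY
  have hYv : ∀ k : ℕ, ValGe v (n + k * c) ((Y ^ k) z) := by
    intro k
    induction k with
    | zero => simpa using hz
    | succ k ih =>
      rw [pow_succ', Module.End.mul_apply]
      refine (hσ _ _ ih).mono (le_of_eq ?_)
      push_cast
      ring
  have hpow : ∀ j : ℕ, (σ ^ j) z = ((Y + 1) ^ j) z := by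
    intro j
    induction j with
    | zero => simp
    | succ j ih =>
      rw [pow_succ', AlgEquiv.mul_apply, pow_succ', Module.End.mul_apply, ih, hY, sub_add_cancel]
      rfl
  have hpoly := congrArg (Polynomial.aeval Y)
    (Polynomial.geom_sum_X_comp_X_add_one_eq_sum (R := F) p)
  simp only [Polynomial.aeval_comp, map_sum, map_pow, Polynomial.aeval_X, map_add, map_one,
    map_mul, map_natCast] at hpoly
  have hsum : ∑ j ∈ Finset.range p, (σ ^ j) z =
      ∑ k ∈ Finset.range p, (p.choose (k + 1) : K) * (Y ^ k) z := by
    have := congrArg (fun f : Module.End F K => f z) hpoly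
    simp only [LinearMap.sum_apply, Module.End.mul_apply, Module.End.natCast_apply] at this
    rw [Finset.sum_congr rfl fun j _ => hpow j, this]
    simp [nsmul_eq_mul]
  rw [hsum]
  refine ValGe.sum hv fun k hk => ?_
  have hkp := Finset.mem_range.1 hk
  rcases Nat.lt_or_ge (k + 1) p with hlt | hge
  · obtain ⟨q, hq⟩ := hp.dvd_choose_self (Nat.succ_ne_zero k) hlt
    rw [hq, Nat.cast_mul]
    refine ((hpE.mul hv (ValGe.natCast hv q)).mul hv (hYv k)).mono ?_
    nlinarith [mul_nonneg (Int.natCast_nonneg k) hc]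
  · have hk1 : (k : ℤ) = p - 1 := by omega
    refine ((ValGe.natCast hv _).mul hv (hYv k)).mono ?_
    rw [hk1]
    linarith

/-- The `p`-th power of `σ` sends `x2` to `x2 + 1` up to higher order terms. -/
lemma valGe_pow_prime_apply_sub (hv : IsDiscVal v) (hp : p.Prime) (hp0 : (p : K) ≠ 0)
    (hpE : v (p : K) = E) (hb1 : 0 < b1) (hE : p * ((p : ℤ) ^ 2 - 1) * b1 < E)
    (hx1g : ValGe v (-(p * b1)) x1) (σ : K ≃ₐ[F] K)
    (hσ : ∀ n z, ValGe v n z → ValGe v (n + b1) (σ z - z)) {x2 ε δ : K}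
    (hσx1 : σ x1 = x1 + 1 + ε) (hε : ValGe v (E - p * (p - 1) * b1) ε)
    (hσx2 : σ x2 = x2 + (x1 ^ p + 1 - (x1 + 1) ^ p) / (p : K) + δ) (hδ : ValGe v 1 δ)
    (hfix : (σ ^ p) x1 = x1) :
    ValGe v ((p - 1) * b1 + 1) ((σ ^ p) x2 - x2 - 1) := by
  have hp2 : (2 : ℤ) ≤ p := by exact_mod_cast hp.two_le
  have hu1 : 0 < (p - 1) * b1 := mul_pos (by linarith) hb1
  have hpu : 2 * ((p - 1) * b1) ≤ p * ((p - 1) * b1) := by nlinarith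
  have hpu2 : 2 * (p * ((p - 1) * b1)) ≤ p * (p * ((p - 1) * b1)) := by nlinarith
  obtain ⟨T, hT⟩ : ∃ T, T = E - p * (p - 1) * b1 := ⟨_, rfl⟩
  rw [← hT] at hε
  have hTb : p * (p * ((p - 1) * b1)) + 1 ≤ T := by linarith
  have hTp : T ≤ (p - 1) * T := by nlinarith
  have hstep : ∀ j : ℕ, ∃ u : K, ValGe v ((p - 1) * b1 + 1) u ∧
      (σ ^ (j + 1)) x2 - (σ ^ j) x2 = 1 / p - (((σ ^ (j + 1)) x1) ^ p / p - ((σ ^ j) x1) ^ p / p)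
        + u + (σ ^ j) δ := by
    intro j
    have hy := valGe_pow_apply hv σ hb1.le hσ hx1g j
    have hεj := valGe_pow_apply hv σ hb1.le hσ hε j
    have hy1 : ValGe v (-(p * b1)) ((σ ^ j) x1 + 1) :=
      hy.add hv ((ValGe.one hv).mono (by nlinarith))
    obtain ⟨w, hw, hwv⟩ := hv.exists_add_pow_prime_eq hp hy1 hεj
    have e1 : (σ ^ (j + 1)) x1 = (σ ^ j) x1 + 1 + (σ ^ j) ε := by
      rw [pow_succ, AlgEquiv.mul_apply, hσx1]
      simp
    have e2 : (σ ^ (j + 1)) x2 = (σ ^ j) x2 +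
        (((σ ^ j) x1) ^ p + 1 - ((σ ^ j) x1 + 1) ^ p) / p + (σ ^ j) δ := by
      rw [pow_succ, AlgEquiv.mul_apply, hσx2]
      simp only [map_add, map_div₀, map_sub, map_pow, map_natCast, map_one]
    refine ⟨((σ ^ j) ε) ^ p / p + w, ?_, ?_⟩
    · refine ((hv.valGe_div (hεj.pow hv p) hp0).mono ?_).add hv (hwv _ ?_ ?_)
      · rw [hpE]
        nlinarith
      · nlinarith
      · nlinarith
    · rw [e2, e1, hw]
      field_simp
      ring
  choose u hu hstep using hstep
  have htel : (σ ^ p) x2 - x2 - 1 =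
      ∑ j ∈ Finset.range p, u j + ∑ j ∈ Finset.range p, (σ ^ j) δ := by
    have h1 := Finset.sum_range_sub (fun j => (σ ^ j) x2) p
    have h2 := Finset.sum_range_sub (fun j => ((σ ^ j) x1) ^ p / (p : K)) p
    rw [Finset.sum_congr rfl fun j _ => hstep j] at h1
    rw [Finset.sum_add_distrib, Finset.sum_add_distrib, Finset.sum_sub_distrib, h2] at h1
    simp only [Finset.sum_const, Finset.card_range, nsmul_eq_mul, hfix, pow_zero,
      AlgEquiv.one_apply, sub_self, sub_zero] at h1
    rw [← h1]
    field_simp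
    ring
  rw [htel]
  refine (ValGe.sum hv fun j _ => hu j).add hv
    ((valGe_sum_pow_apply hv hp (ValGe.of_le hpE.ge) σ hb1.le ?_ hσ hδ).mono (by linarith))
  nlinarith [mul_pos (by linarith : (0 : ℤ) < p - 1) hb1, mul_pos (by linarith : (0 : ℤ) < p) hb1]


lemma valGe_End_pow_apply {φ : Module.End F K} {c : ℤ}
    (hφ : ∀ n z, ValGe v n z → ValGe v (n + c) (φ z)) {n : ℤ} {z : K} (hz : ValGe v n z) (k : ℕ) :
    ValGe v (n + k * c) ((φ ^ k) z) := by
  induction k with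
  | zero => simpa using hz
  | succ k ih =>
    rw [pow_succ', Module.End.mul_apply]
    refine (hφ _ _ ih).mono (le_of_eq ?_)
    push_cast
    ring

/-- The difference operator of `s` acts on falling factorials like a derivative. -/
lemma valGe_difference_fallFact_sub (hv : IsDiscVal v) (hb2 : 0 ≤ b2) (s : K ≃ₐ[F] K) {e : ℤ}
    (he : 0 ≤ e) (hX : ValGe v (-b2) X) (hsX : ValGe v e (s X - X - 1)) (k : ℕ) :
    ValGe v (e - k * b2)
      ((s.toLinearMap - 1 : Module.End F K) (fallFact X (k + 1)) - (k + 1) * fallFact X k) := by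
  have h1 : ValGe v (-b2) (X + 1) := hX.add hv ((ValGe.one hv).mono (by omega))
  have h := valGe_fallFact_add_sub hv h1 hsX (by omega) (by omega) (k + 1)
  have heq : (s.toLinearMap - 1 : Module.End F K) (fallFact X (k + 1)) - (k + 1) * fallFact X k =
      fallFact (X + 1 + (s X - X - 1)) (k + 1) - fallFact (X + 1) (k + 1) := by
    have h2 : X + 1 + (s X - X - 1) = s X := by ring
    have h3 : s (fallFact X (k + 1)) = fallFact (s X) (k + 1) :=
      map_fallFact (s : K →ₐ[F] K) X (k + 1)
    rw [h2, fallFact_add_one, LinearMap.sub_apply, Module.End.one_apply, AlgEquiv.toLinearMap_apply,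
      h3]
    ring
  rw [heq]
  refine h.mono (le_of_eq ?_)
  push_cast
  ring

/-- The truncated binomial power `(1 + Ψ2) ^ μ` translates `X` by `μ`, up to higher order terms. -/
lemma valGe_truncated_pow_fallFact_sub [CharZero F] [CharZero K] (hv : IsDiscVal v) (hp : p.Prime)
    (hp1 : ValGe v 1 (p : K)) (hb1 : 0 < b1) (hm : 0 < m) (hb2 : b2 = (p : ℤ) ^ 2 * m + b1)
    {μ : F} (hμ : ValGe v (-((p : ℤ) ^ 2 * m)) (algebraMap F K μ)) (s : K ≃ₐ[F] K)
    (hs : ∀ n z, ValGe v n z → ValGe v (n + b2) (s z - z))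
    (hX : ValGe v (-b2) X) (hsX : ValGe v ((p - 1) * b1 + 1) (s X - X - 1)) {n : ℕ} (hn : n < p) :
    ValGe v (p * b1 + 1 - n * b2)
      ((∑ i ∈ Finset.range p, (fallFact μ i / (i.factorial : F)) •
        (s.toLinearMap - 1 : Module.End F K) ^ i) (fallFact X n)
          - fallFact (X + algebraMap F K μ) n) := by
  have hp2 : (2 : ℤ) ≤ p := by exact_mod_cast hp.two_le
  have hpm : 0 < (p : ℤ) ^ 2 * m := by positivity
  have he : 0 ≤ (p - 1) * b1 + 1 := by nlinarith
  have hiter := valGe_iterate_sub_descFactorial (φ := (s.toLinearMap - 1 : Module.End F K))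
    (g := fallFact X) (w := 0) (c := b2) (e := (p - 1) * b1 + 1) hv hs
    (by simpa [fallFact_zero] using ValGe.zero)
    (fun k => (valGe_difference_fallFact_sub hv (by omega) s he hX hsX k).mono (by linarith)) n
  rw [fallFact_add_eq_sum_range X _ hn, LinearMap.sum_apply, ← Finset.sum_sub_distrib]
  refine ValGe.sum hv fun i hi => ?_
  have hip := Finset.mem_range.1 hi
  obtain ⟨hf0, hfv⟩ := hv.map_natCast_eq_zero hp1 (k := i.factorial)
    ((Nat.coprime_comm.1 (hp.coprime_factorial_of_lt hip)))
  have hterm : ((fallFact μ i / (i.factorial : F)) •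
      (s.toLinearMap - 1 : Module.End F K) ^ i) (fallFact X n) -
      (n.choose i : K) * (fallFact (algebraMap F K μ) i * fallFact X (n - i)) =
      fallFact (algebraMap F K μ) i / (i.factorial : K) *
        (((s.toLinearMap - 1 : Module.End F K) ^ i) (fallFact X n) -
          n.descFactorial i * fallFact X (n - i)) := by
    rw [LinearMap.smul_apply, Algebra.smul_def, map_div₀, algebraMap_fallFact, map_natCast,
      Nat.descFactorial_eq_factorial_mul_choose]
    push_cast
    field_simp
  rw [hterm]
  rcases i with _ | i
  · simpa using ValGe.zero
  refine ((hv.valGe_div (valGe_fallFact hv hμ (by omega) (i + 1)) hf0).mul hv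
    (hiter (i + 1))).mono ?_
  rw [hfv, hb2]
  push_cast
  nlinarith [mul_nonneg (Int.natCast_nonneg i) hb1.le]

lemma valGe_add_pow_succ_sub (hv : IsDiscVal v) {r : ℤ} (hr : r < 0) (hx : ValGe v r x1) {t : K}
    (ht : ValGe v 1 (t - 1)) (k : ℕ) :
    ValGe v (k * r + 1) ((x1 + t) ^ (k + 1) - x1 ^ (k + 1) - (k + 1) * x1 ^ k) := by
  have ht0 : ValGe v 0 t := by
    simpa using (ht.mono (by omega : (0 : ℤ) ≤ 1)).add hv (ValGe.one hv)
  induction k with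
  | zero => simpa using ht
  | succ k ih =>
    have h : (x1 + t) ^ (k + 1 + 1) - x1 ^ (k + 1 + 1) - ((k + 1 : ℕ) + 1) * x1 ^ (k + 1) =
        ((x1 + t) ^ (k + 1) - x1 ^ (k + 1) - (k + 1) * x1 ^ k) * (x1 + t) +
          (t - 1) * x1 ^ (k + 1) + (k + 1 : ℕ) * (x1 ^ k * t) := by
      push_cast
      ring
    rw [h]
    refine (((ih.mul hv (hx.add hv (ht0.mono hr.le))).mono ?_).add hv
      ((ht.mul hv (hx.pow hv (k + 1))).mono ?_)).add hv
      (ValGe.natCast_mul hv _ (((hx.pow hv k).mul hv ht0).mono ?_))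
    all_goals push_cast; linarith

/-- The operator `Ψ1` acts on scaffold monomials like a derivative with respect to `x1`. -/
lemma valGe_scaffold_apply_sub (hv : IsDiscVal v) (hp : p.Prime) (hb1 : 0 < b1)
    (hb2 : 0 ≤ b2) (hx : ValGe v (-(p * b1)) x1) (hX : ValGe v (-b2) X) (σ s : K ≃ₐ[F] K)
    (hσ : ∀ n z, ValGe v n z → ValGe v n (σ z)) (hsx : s x1 = x1)
    (hσx : ValGe v 1 (σ x1 - x1 - 1)) {a : ℕ → F} {M : F}
    (hσX : ValGe v (-b2 + p * b1 + 1) (σ X + algebraMap F K M - X)) {n : ℕ}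
    (hW : ValGe v (p * b1 + 1 - n * b2)
      ((∑ i ∈ Finset.range p, a i • (s.toLinearMap - 1 : Module.End F K) ^ i) (fallFact X n)
          - fallFact (X + algebraMap F K M) n)) :
    ValGe v (-(n * b2) + p * b1 + 1)
      (((σ.toLinearMap : Module.End F K) *
        (∑ i ∈ Finset.range p, a i • (s.toLinearMap - 1 : Module.End F K) ^ i) - 1 :
          Module.End F K) (scaffoldMonomial x1 X 0 n)) ∧
    ∀ k : ℕ, ValGe v (-(n * b2) - k * (p * b1) + 1)
      (((σ.toLinearMap : Module.End F K) *
        (∑ i ∈ Finset.range p, a i • (s.toLinearMap - 1 : Module.End F K) ^ i) - 1 :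
          Module.End F K) (scaffoldMonomial x1 X (k + 1) n)
        - (k + 1) * scaffoldMonomial x1 X k n) := by
  have hpb : 0 < p * b1 := mul_pos (by exact_mod_cast hp.pos) hb1
  set W : Module.End F K :=
    ∑ i ∈ Finset.range p, a i • (s.toLinearMap - 1 : Module.End F K) ^ i with hWdef
  have hdiff : ∀ (k j : ℕ) (z : K), ((s.toLinearMap - 1 : Module.End F K) ^ j) (x1 ^ k * z) =
      x1 ^ k * ((s.toLinearMap - 1 : Module.End F K) ^ j) z := by
    intro k j z
    induction j with
    | zero => simp
    | succ j ih =>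
      rw [pow_succ', Module.End.mul_apply, Module.End.mul_apply, ih]
      simp only [LinearMap.sub_apply, Module.End.one_apply, AlgEquiv.toLinearMap_apply, map_mul,
        map_pow, hsx]
      ring
  have hWx : ∀ (k : ℕ) (z : K), W (x1 ^ k * z) = x1 ^ k * W z := by
    intro k z
    simp only [hWdef, LinearMap.sum_apply, LinearMap.smul_apply, hdiff, Finset.mul_sum,
      mul_smul_comm]
  have happly : ∀ k : ℕ, ((σ.toLinearMap : Module.End F K) * W - 1 : Module.End F K)
      (scaffoldMonomial x1 X k n) = (σ x1) ^ k * σ (W (fallFact X n)) - x1 ^ k * fallFact X n := by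
    intro k
    rw [LinearMap.sub_apply, Module.End.mul_apply, Module.End.one_apply, scaffoldMonomial, hWx,
      AlgEquiv.toLinearMap_apply, map_mul, map_pow]
  have herr : ValGe v (p * b1 + 1 - n * b2) (σ (W (fallFact X n)) - fallFact X n) := by
    have h1 := hσ _ _ hW
    have h2 := valGe_fallFact_add_sub hv hX hσX (by omega) (by omega) n
    have h3 : σ (fallFact (X + algebraMap F K M) n) = fallFact (σ (X + algebraMap F K M)) n :=
      map_fallFact (σ : K →ₐ[F] K) _ n
    have h4 : X + (σ X + algebraMap F K M - X) = σ (X + algebraMap F K M) := by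
      rw [map_add, AlgEquiv.commutes]
      ring
    rw [map_sub, h3] at h1
    rw [h4] at h2
    simpa using h1.add hv (h2.mono (by linarith))
  refine ⟨?_, fun k => ?_⟩
  · rw [happly, pow_zero, pow_zero, one_mul, one_mul]
    exact herr.mono (by linarith)
  · have hσx1 : ValGe v (-(p * b1)) (σ x1) := hσ _ _ hx
    have hpow := valGe_add_pow_succ_sub hv (by omega) hx (t := σ x1 - x1) hσx k
    rw [add_sub_cancel] at hpow
    have heq : (σ x1) ^ (k + 1) * σ (W (fallFact X n)) - x1 ^ (k + 1) * fallFact X n -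
        (k + 1) * scaffoldMonomial x1 X k n =
        (σ x1) ^ (k + 1) * (σ (W (fallFact X n)) - fallFact X n) +
          ((σ x1) ^ (k + 1) - x1 ^ (k + 1) - (k + 1) * x1 ^ k) * fallFact X n := by
      rw [scaffoldMonomial]
      ring
    rw [happly, heq]
    refine (((hσx1.pow hv (k + 1)).mul hv herr).mono ?_).add hv
      ((hpow.mul hv (valGe_fallFact hv hX (by omega) n)).mono ?_)
    · push_cast
      linarith
    · linarith

end extension

/-- The leading term of an element with respect to a family with distinct valuations. -/
lemma exists_leading_term {F K : Type*} [Field F] [Field K] [Algebra F K] [FiniteDimensional F K]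
    {v0 : F → ℤ} {v : K → ℤ} {N : ℤ} {ι : Type*} [Fintype ι] {f : ι → K} (hv : IsDiscVal v)
    (hram : ∀ x : F, x ≠ 0 → v (algebraMap F K x) = N * v0 x)
    (hf : ∀ i, f i ≠ 0) (hdist : ∀ i j, N ∣ v (f i) - v (f j) → i = j)
    (hcard : Fintype.card ι = Module.finrank F K) {z : K} (hz : z ≠ 0) {i0 : ι}
    (hi0 : N ∣ v z - v (f i0)) :
    ∃ c : F, c ≠ 0 ∧ v (algebraMap F K c) + v (f i0) = v z ∧
      ValGe v (v z + 1) (z - c • f i0) := by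
  classical
  obtain ⟨c, hc⟩ := exists_eq_sum_smul_of_val_distinct hv hram hf hdist hcard z
  have hge := fun i => valGe_smul_of_valGe_sum (n := v z) (c := c) hv hram hf hdist
    (by rw [← hc]; exact ValGe.of_le le_rfl) i
  have hrest : ValGe v (v z + 1) (z - c i0 • f i0) := by
    have h1 := Finset.add_sum_erase Finset.univ (fun i => c i • f i) (Finset.mem_univ i0)
    have h2 : z - c i0 • f i0 = ∑ i ∈ Finset.univ.erase i0, c i • f i := by
      rw [sub_eq_iff_eq_add', h1]
      exact hc
    rw [h2]
    refine ValGe.sum hv fun i hi => ?_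
    by_cases h0 : c i = 0
    · rw [h0, zero_smul]
      exact ValGe.zero
    refine ValGe.of_le (lt_of_le_of_ne ((hge i).le (smul_ne_zero h0 (hf i))) fun he => ?_)
    refine Finset.ne_of_mem_erase hi (hdist i i0 ?_)
    rw [Algebra.smul_def, hv.map_mul _ _ (by simpa using h0) (hf i), hram _ h0] at he
    obtain ⟨t, ht⟩ := hi0
    exact ⟨t - v0 (c i), by linear_combination ht - he⟩
  obtain ⟨h0, h1⟩ := hv.eq_of_valGe_sub (y := c i0 • f i0) hz
    (by simpa using hrest.neg hv)
  have hc0 : c i0 ≠ 0 := fun h => h0 (by rw [h, zero_smul])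
  refine ⟨c i0, hc0, ?_, hrest⟩
  rw [← h1, Algebra.smul_def, hv.map_mul _ _ (by simpa using hc0) (hf i0)]

/-- Two operators acting on a doubly indexed family like partial derivatives raise the valuation of
an element with leading term of top degree by the expected amounts. -/
lemma val_pow_apply_pow_apply {F K : Type*} [Field F] [Field K] [Algebra F K]
    {v : K → ℤ} (hv : IsDiscVal v) {p : ℕ} (hp : p.Prime) (hp1 : ValGe v 1 (p : K))
    {g : ℕ → ℕ → K} {c1 c2 : ℤ} (hg0 : ∀ i j, g i j ≠ 0)
    (hgv : ∀ i j : ℕ, v (g i j) = -(j * c2 + i * c1)) {φ1 φ2 : Module.End F K}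
    (h1 : ∀ n z, ValGe v n z → ValGe v (n + c1) (φ1 z))
    (h2 : ∀ n z, ValGe v n z → ValGe v (n + c2) (φ2 z))
    (h1zero : ∀ j : ℕ, j < p → ValGe v (-(j * c2) + c1 + 1) (φ1 (g 0 j)))
    (h1succ : ∀ j : ℕ, j < p → ∀ k : ℕ,
      ValGe v (-(j * c2) - k * c1 + 1) (φ1 (g (k + 1) j) - (k + 1) * g k j))
    (h2zero : ∀ i : ℕ, ValGe v (-(i * c1) + c2 + 1) (φ2 (g i 0)))
    (h2succ : ∀ i k : ℕ,
      ValGe v (-(i * c1) - k * c2 + 1) (φ2 (g i (k + 1)) - (k + 1) * g i k))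
    {z : K} {c : F} (hc : c ≠ 0)
    (hcv : v (algebraMap F K c) + v (g (p - 1) (p - 1)) = v z)
    (hz : ValGe v (v z + 1) (z - c • g (p - 1) (p - 1))) {i j : ℕ} (hi : i < p) (hj : j < p) :
    (φ2 ^ j) ((φ1 ^ i) z) ≠ 0 ∧ v ((φ2 ^ j) ((φ1 ^ i) z)) = v z + j * c2 + i * c1 := by
  obtain ⟨q, rfl⟩ : ∃ q, p = q + 1 := ⟨p - 1, (Nat.succ_pred_prime hp).symm⟩
  rw [Nat.add_sub_cancel] at hcv hz
  have hunit : ∀ k ≤ q, ((q.descFactorial k : ℕ) : K) ≠ 0 ∧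
      v ((q.descFactorial k : ℕ) : K) = 0 := by
    intro k hk
    refine hv.map_natCast_eq_zero hp1 (Nat.coprime_comm.1 ?_)
    refine (hp.coprime_factorial_of_lt (Nat.lt_succ_self q)).coprime_dvd_right ?_
    exact ⟨(q - k).factorial, by rw [mul_comm, Nat.factorial_mul_descFactorial hk]⟩
  have hi' : i ≤ q := by omega
  have hj' : j ≤ q := by omega
  obtain ⟨hu1, hu1v⟩ := hunit i hi'
  obtain ⟨hu2, hu2v⟩ := hunit j hj'
  have e1 := valGe_iterate_sub_descFactorial (φ := φ1) (g := fun k => g k q) (w := -(q * c2))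
    (e := 1) hv h1 (h1zero q (by omega)) (h1succ q (by omega)) q i
  have e2 := valGe_iterate_sub_descFactorial (φ := φ2) (g := fun k => g (q - i) k)
    (w := -((q - i : ℕ) * c1)) (e := 1) hv h2 (h2zero (q - i)) (h2succ (q - i)) q j
  have hc0 : algebraMap F K c ≠ 0 := by simpa using hc
  have hcg : ValGe v (v (algebraMap F K c)) (algebraMap F K c) := ValGe.of_le le_rfl
  rw [hgv] at hcv
  have hlead0 : algebraMap F K c *
      (q.descFactorial i * (q.descFactorial j * g (q - i) (q - j))) ≠ 0 :=
    mul_ne_zero hc0 (mul_ne_zero hu1 (mul_ne_zero hu2 (hg0 _ _)))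
  have hlead : v (algebraMap F K c *
      (q.descFactorial i * (q.descFactorial j * g (q - i) (q - j)))) =
      v z + j * c2 + i * c1 := by
    rw [hv.map_mul _ _ hc0 (mul_ne_zero hu1 (mul_ne_zero hu2 (hg0 _ _))),
      hv.map_mul _ _ hu1 (mul_ne_zero hu2 (hg0 _ _)), hv.map_mul _ _ hu2 (hg0 _ _), hu1v, hu2v,
      hgv, Nat.cast_sub hi', Nat.cast_sub hj']
    linarith
  have hsplit : (φ2 ^ j) ((φ1 ^ i) z) -
      algebraMap F K c * (q.descFactorial i * (q.descFactorial j * g (q - i) (q - j))) =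
      (φ2 ^ j) ((φ1 ^ i) (z - c • g q q)) +
      algebraMap F K c * (φ2 ^ j) ((φ1 ^ i) (g q q) - q.descFactorial i * g (q - i) q) +
      algebraMap F K c * (q.descFactorial i *
        ((φ2 ^ j) (g (q - i) q) - q.descFactorial j * g (q - i) (q - j))) := by
    have hnat : (φ2 ^ j) ((q.descFactorial i : K) * g (q - i) q) =
        q.descFactorial i * (φ2 ^ j) (g (q - i) q) := by
      simpa [nsmul_eq_mul] using map_nsmul (φ2 ^ j) (q.descFactorial i) (g (q - i) q)
    rw [map_sub, map_sub, map_smul, map_smul, map_sub, hnat, Algebra.smul_def]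
    ring
  have := hv.eq_of_valGe_sub (y := (φ2 ^ j) ((φ1 ^ i) z)) hlead0 (by
    rw [hlead, hsplit]
    refine (((valGe_End_pow_apply h2 (valGe_End_pow_apply h1 hz i) j).mono ?_).add hv
      ((hcg.mul hv (valGe_End_pow_apply h2 e1 j)).mono ?_)).add hv
      ((hcg.mul hv (ValGe.natCast_mul hv _ e2)).mono ?_)
    · linarith
    · linarith
    · rw [Nat.cast_sub hi']
      linarith)
  exact ⟨this.1, this.2.trans hlead⟩

/-- The span of the Galois group inside the endomorphism algebra is a subalgebra. -/
lemma exists_subalgebra_eq_span_aut (F K : Type*) [Field F] [Field K] [Algebra F K] :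
    ∃ R : Subalgebra F (Module.End F K), Subalgebra.toSubmodule R = Submodule.span F
      {f : Module.End F K | ∃ σ : K ≃ₐ[F] K, f = (σ.toLinearMap : Module.End F K)} := by
  refine ⟨Submodule.toSubalgebra (Submodule.span F
      {f : Module.End F K | ∃ σ : K ≃ₐ[F] K, f = (σ.toLinearMap : Module.End F K)})
    (Submodule.subset_span ⟨1, rfl⟩) fun f g hf hg => ?_, Submodule.toSubalgebra_toSubmodule _ _ _⟩
  have hfg := Submodule.mul_mem_mul hf hg
  rw [Submodule.span_mul_span] at hfg
  refine Submodule.span_mono ?_ hfg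
  rintro _ ⟨_, ⟨σ, rfl⟩, _, ⟨τ, rfl⟩, rfl⟩
  exact ⟨σ * τ, rfl⟩

/-- If elements of the group algebra, as many as the degree of the extension, take linearly
independent values at `ρ`, then they form a basis of the group algebra and the conjugates of `ρ`
form a normal basis. -/
lemma normalBasis_and_basis_span_aut {F K ι : Type*} [Field F] [Field K] [Algebra F K]
    [FiniteDimensional F K] [IsGalois F K] [Fintype ι]
    (hcard : Fintype.card ι = Module.finrank F K) {Ψ : ι → Module.End F K}
    (hΨ : ∀ i, Ψ i ∈ Submodule.span F
      {f : Module.End F K | ∃ σ : K ≃ₐ[F] K, f = (σ.toLinearMap : Module.End F K)})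
    {ρ : K} (hli : LinearIndependent F fun i => Ψ i ρ) :
    LinearIndependent F (fun σ : K ≃ₐ[F] K => σ ρ) ∧
    Submodule.span F (Set.range (fun σ : K ≃ₐ[F] K => σ ρ)) = ⊤ ∧
    LinearIndependent F Ψ ∧
    Submodule.span F (Set.range Ψ) = Submodule.span F
      {f : Module.End F K | ∃ σ : K ≃ₐ[F] K, f = (σ.toLinearMap : Module.End F K)} := by
  have hG : Fintype.card (K ≃ₐ[F] K) = Module.finrank F K := by
    rw [← Nat.card_eq_fintype_card, IsGalois.card_aut_eq_finrank]
  have hspan : ⊤ ≤ Submodule.span F (Set.range (fun σ : K ≃ₐ[F] K => σ ρ)) := by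
    rw [← hli.span_eq_top_of_card_eq_finrank' hcard, Submodule.span_le]
    rintro _ ⟨i, rfl⟩
    have hle : Submodule.span F
        {f : Module.End F K | ∃ σ : K ≃ₐ[F] K, f = (σ.toLinearMap : Module.End F K)} ≤
        (Submodule.span F (Set.range (fun σ : K ≃ₐ[F] K => σ ρ))).comap
          (LinearMap.applyₗ ρ : Module.End F K →ₗ[F] K) := by
      rw [Submodule.span_le]
      rintro _ ⟨σ, rfl⟩
      exact Submodule.subset_span ⟨σ, rfl⟩
    exact hle (hΨ i)
  have hΨli : LinearIndependent F Ψ :=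
    LinearIndependent.of_comp (LinearMap.applyₗ ρ : Module.End F K →ₗ[F] K) hli
  refine ⟨linearIndependent_of_top_le_span_of_card_eq_finrank hspan hG, top_le_iff.1 hspan, hΨli,
    Submodule.eq_of_le_of_finrank_le ?_ ?_⟩
  · rw [Submodule.span_le]
    rintro _ ⟨i, rfl⟩
    exact hΨ i
  · rw [finrank_span_eq_card hΨli, hcard, ← hG]
    have hset : {f : Module.End F K | ∃ σ : K ≃ₐ[F] K, f = (σ.toLinearMap : Module.End F K)} =
        Set.range fun σ : K ≃ₐ[F] K => (σ.toLinearMap : Module.End F K) := by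
      ext f
      exact exists_congr fun σ => eq_comm
    rw [hset]
    exact finrank_range_le_card _

set_option maxHeartbeats 4000000 in
/-- `{ρ_a : 0 ≤ a < p²}` is an `𝔒₀`-basis of `𝔒₂`
(membership in the valuation rings being `z = 0 ∨ 0 ≤ v(z)`), `ρ` generates a
normal basis of `K₂/K₀`, and `{Ψ^{(a)} : 0 ≤ a < p²}` is a `K₀`-basis of the
group algebra `K₀[G]`, realized as the `K₀`-span of `G` inside
`End_{K₀}(K₂)`. -/
theorem statement13
    (p : ℕ) (hp : p.Prime)
    (K0 K2 : Type*) [Field K0] [Field K2] [CharZero K0] [CharZero K2]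
    [Algebra K0 K2] [IsGalois K0 K2] [FiniteDimensional K0 K2]
    (hdeg : Module.finrank K0 K2 = p ^ 2)
    (hcyc : IsCyclic (K2 ≃ₐ[K0] K2))
    (v0 : K0 → ℤ) (v2 : K2 → ℤ)
    (hv0 : IsDiscVal v0) (hv2 : IsDiscVal v2)
    (e0 : ℤ) (he0 : e0 = v0 (p : K0)) (he0pos : 1 ≤ e0)
    (hram : ∀ x : K0, x ≠ 0 → v2 (algebraMap K0 K2 x) = (p : ℤ) ^ 2 * v0 x)
    (a1 μ a2 : K0) (ha1 : a1 ≠ 0) (hμ0 : μ ≠ 0)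
    (hwitt : ∀ y : K0, y ^ p - y ≠ a1)
    (hnd : ¬ ((p : ℤ) ∣ v0 a1))
    (hneg : v0 a1 < 0)
    (hbd : -((p : ℤ) * e0) < ((p : ℤ) ^ 2 - 1) * v0 a1)
    (m : ℤ) (hm : m = -v0 μ) (hmpos : 0 < m)
    (hmu1 : (p : ℤ) ^ 2 * (p - 1) * m - (2 * p * (p - 1) + 1) * v0 a1 < (p : ℤ) ^ 2 * e0)
    (hmu2 : -(((p : ℤ) ^ 2 - 1) * v0 a1) < (p : ℤ) ^ 2 * m)
    (ha2 : a2 = μ ^ p * a1)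
    (x1 x2 : K2)
    (hx1 : x1 ^ p - x1 = algebraMap K0 K2 a1)
    (hx2 : x2 ^ p - x2 = algebraMap K0 K2 a2 +
      (x1 ^ p + (algebraMap K0 K2 a1) ^ p - (x1 + algebraMap K0 K2 a1) ^ p) / (p : K2))
    (hgen : Algebra.adjoin K0 {x1, x2} = ⊤)
    (b1 b2 : ℤ) (hb1 : b1 = -v0 a1) (hb2 : b2 = (p : ℤ) ^ 2 * m + b1)
    (σ1 : K2 ≃ₐ[K0] K2) (ε δ' : K2)
    (hσ1x1 : σ1 x1 = x1 + 1 + ε)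
    (hε : ε ≠ 0) (hεv : v2 ε = (p : ℤ) ^ 2 * e0 - p * (p - 1) * b1)
    (hσ1x2 : σ1 x2 = x2 + (x1 ^ p + 1 - (x1 + 1) ^ p) / (p : K2) + δ')
    (hδ' : δ' = 0 ∨ 0 < v2 δ')
    (Ψ1 Ψ2 : Module.End K0 K2)
    (hΨ2 : Ψ2 = ((σ1 ^ p).toLinearMap : Module.End K0 K2) - 1)
    (hΨ1 : Ψ1 = (σ1.toLinearMap : Module.End K0 K2) *
      (∑ i ∈ Finset.range p,
        ((∏ k ∈ Finset.range i, (μ - (k : K0))) / (Nat.factorial i : K0)) • Ψ2 ^ i) - 1)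
    (π0 : K0) (hπ0 : π0 ≠ 0) (hπ0v : v0 π0 = 1)
    (ρ0 : K2) (hρ0 : ρ0 ≠ 0) (hρ0v : v2 ρ0 = b2 % (p : ℤ) ^ 2)
    (d : ℕ → ℤ)
    (hd : ∀ a : ℕ, a < p ^ 2 →
      d a = Int.fdiv ((1 + ((a / p : ℕ) : ℤ)) * b2 + ((a % p : ℕ) : ℤ) * (p : ℤ) * b1)
        ((p : ℤ) ^ 2))
    (Ψf : ℕ → Module.End K0 K2)
    (hΨf : ∀ a : ℕ, Ψf a = if a < p ^ 2 then Ψ2 ^ (a / p) * Ψ1 ^ (a % p) else 0)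
    (ρ : K2) (hρ : ρ = algebraMap K0 K2 (π0 ^ d 0) * ρ0)
    (ρf : ℕ → K2) (hρf : ∀ a : ℕ, ρf a = algebraMap K0 K2 (π0 ^ (-d a)) * Ψf a ρ) :
    LinearIndependent K0 (fun a : Fin (p ^ 2) => ρf a) ∧
    (∀ z : K2, (z = 0 ∨ 0 ≤ v2 z) ↔
      ∃ c : Fin (p ^ 2) → K0, (∀ i, c i = 0 ∨ 0 ≤ v0 (c i)) ∧
        z = ∑ i, algebraMap K0 K2 (c i) * ρf i) ∧
    LinearIndependent K0 (fun σ : K2 ≃ₐ[K0] K2 => σ ρ) ∧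
    Submodule.span K0 (Set.range (fun σ : K2 ≃ₐ[K0] K2 => σ ρ)) = ⊤ ∧
    LinearIndependent K0 (fun a : Fin (p ^ 2) => Ψf a) ∧
    Submodule.span K0 (Set.range (fun a : Fin (p ^ 2) => Ψf a)) =
      Submodule.span K0
        {f : Module.End K0 K2 | ∃ σ : K2 ≃ₐ[K0] K2, f = (σ.toLinearMap : Module.End K0 K2)} := by
  have hp2 : (2 : ℤ) ≤ p := by exact_mod_cast hp.two_le
  have hpn : p ≠ 0 := hp.ne_zero
  have hp0 : (p : K2) ≠ 0 := by exact_mod_cast hpn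
  have hpv : v2 (p : K2) = (p : ℤ) ^ 2 * e0 := by
    have := hram (p : K0) (by exact_mod_cast hpn)
    rwa [map_natCast, ← he0] at this
  have hpE : ValGe v2 ((p : ℤ) ^ 2 * e0) (p : K2) := ValGe.of_le hpv.ge
  have hb1pos : 0 < b1 := by omega
  have hnd1 : ¬ (p : ℤ) ∣ b1 := by rwa [hb1, dvd_neg]
  have ha1v : v0 a1 = -b1 := by omega
  rw [ha1v] at hbd hmu2
  have hE : p * ((p : ℤ) ^ 2 - 1) * b1 < (p : ℤ) ^ 2 * e0 := by nlinarith
  have hbm : ((p : ℤ) ^ 2 - 1) * b1 < (p : ℤ) ^ 2 * m := by linarith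
  have hpm : 0 < (p : ℤ) ^ 2 * m := by positivity
  have hb2pos : 0 < b2 := by omega
  have hb12 : b1 ≤ b2 := by omega
  have hpb1 : b1 ≤ p * b1 := by nlinarith
  have hpp1 : 0 < p * (p - 1) * b1 := by
    have : (0 : ℤ) < p - 1 := by omega
    positivity
  have hp1 : ValGe v2 1 (p : K2) := hpE.mono (by nlinarith)
  set A := algebraMap K0 K2 a1 with hA
  set M := algebraMap K0 K2 μ with hM
  have hM0 : M ≠ 0 := by simpa [hM] using hμ0
  have hMv : v2 M = -((p : ℤ) ^ 2 * m) := by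
    rw [hM, hram μ hμ0, hm]
    ring
  have hMg : ValGe v2 (-((p : ℤ) ^ 2 * m)) M := ValGe.of_le hMv.ge
  have hAv : v2 A = -((p : ℤ) ^ 2 * b1) := by
    rw [hA, hram a1 ha1, ha1v]
    ring
  obtain ⟨hx0, hx1v⟩ := hv2.val_root (n := -(p * b1)) hp (by simpa [hA] using ha1) (by omega)
    (by rw [hAv]; ring) hx1
  have hx1g : ValGe v2 (-(p * b1)) x1 := ValGe.of_le hx1v.ge
  obtain ⟨hX0, hXv⟩ := val_reduced_generator hv2 hp hp0 hpE hb1pos hmpos hE hbm hx0 hx1v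
    (ValGe.of_le hAv.ge) hx1 hM0 hMv (by rw [hx2, ha2, map_mul, map_pow])
  rw [← hb2] at hXv
  set X := x2 - M * x1 with hX
  have hXg : ValGe v2 (-b2) X := ValGe.of_le hXv.ge
  have hεg : ValGe v2 ((p : ℤ) ^ 2 * e0 - p * (p - 1) * b1) ε := ValGe.of_le hεv.ge
  have hε1 : ValGe v2 (p * (p * ((p - 1) * b1)) + 1) ε := hεg.mono (by linarith)
  have hδg : ValGe v2 1 δ' := hδ'
  -- the monomials form a basis with distinct valuations
  have hmon := val_scaffoldMonomial hv2 hx0 hx1v hX0 hXv hb2pos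
  have hdist := scaffoldMonomial_val_distinct hv2 hp hnd1 hb2 hx0 hx1v hX0 hXv hb2pos
  have hcard : Fintype.card (Fin p × Fin p) = Module.finrank K0 K2 := by
    rw [hdeg, Fintype.card_prod, Fintype.card_fin, sq]
  have hraise : ∀ (τ : K2 ≃ₐ[K0] K2) (c : ℤ), 0 ≤ c → ValGe v2 (-(p * b1) + c) (τ x1 - x1) →
      ValGe v2 (-b2 + c) (τ X - X) → ∀ n z, ValGe v2 n z → ValGe v2 (n + c) (τ z - z) := by
    intro τ c hc hτx hτX n z hz
    refine valGe_map_of_val_distinct (φ := τ.toLinearMap - 1) hv2 hram (fun s => (hmon _ _).1)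
      hdist hcard (fun s => ?_) hz
    refine (valGe_map_scaffoldMonomial_sub hv2 τ hc (by omega) hx1g hXg hτx hτX s.1 s.2).mono ?_
    rw [(hmon _ _).2]
    linarith
  -- the action of `σ1`
  have hσX : ValGe v2 (-b2 + p * b1 + 1) (σ1 X + M - X) := by
    have heq : σ1 X + M - X = (x1 ^ p + 1 ^ p - (x1 + 1) ^ p) / (p : K2) + δ' - M * ε := by
      rw [hX, map_sub, map_mul, hM, AlgEquiv.commutes, hσ1x2, hσ1x1, one_pow]
      ring
    rw [heq]
    refine ((valGe_witt_cocycle hv2 hp hp0 hx1g (ValGe.one hv2) ?_ ?_).add hv2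
      (hδg.mono ?_)).sub hv2 ((hMg.mul hv2 hε1).mono ?_)
    · nlinarith
    · nlinarith
    · nlinarith
    · nlinarith
  have hσx : ValGe v2 1 (σ1 x1 - x1 - 1) := by
    have : σ1 x1 - x1 - 1 = ε := by rw [hσ1x1]; ring
    rw [this]
    exact hε1.mono (by nlinarith)
  have hσ := hraise σ1 b1 hb1pos.le
    (by
      have := (hσx.mono (by omega : (0 : ℤ) ≤ 1)).add hv2 (ValGe.one hv2)
      rw [sub_add_cancel] at this
      exact this.mono (by omega))
    (by
      have := (hσX.mono (by omega : -b2 + b1 ≤ _)).sub hv2 (hMg.mono (by omega))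
      rwa [add_sub_right_comm, add_sub_cancel_right] at this)
  have hσ' : ∀ n z, ValGe v2 n z → ValGe v2 n (σ1 z) := fun n z hz => by
    simpa using valGe_pow_apply hv2 σ1 hb1pos.le hσ hz 1
  -- the action of `σ1 ^ p`
  have hfix : (σ1 ^ p) x1 = x1 := by
    refine eq_of_pow_sub_self_eq hv2 hp hpE hb1pos hE hx1g ?_ ?_
    · rw [← map_pow, ← map_sub, hx1, hA, AlgEquiv.commutes]
    · have h1 := Finset.sum_range_sub (fun j => (σ1 ^ j) x1) p
      have h2 : ∀ j : ℕ, (σ1 ^ (j + 1)) x1 - (σ1 ^ j) x1 = 1 + (σ1 ^ j) ε := by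
        intro j
        rw [pow_succ, AlgEquiv.mul_apply, hσ1x1, map_add, map_add, map_one]
        ring
      rw [Finset.sum_congr rfl fun j _ => h2 j, Finset.sum_add_distrib, pow_zero,
        AlgEquiv.one_apply, Finset.sum_const, Finset.card_range, nsmul_eq_mul, mul_one] at h1
      rw [← h1]
      exact hp1.add hv2 (ValGe.sum hv2 fun j _ =>
        valGe_pow_apply hv2 σ1 hb1pos.le hσ (hε1.mono (by nlinarith)) j)
  have hsX : ValGe v2 ((p - 1) * b1 + 1) ((σ1 ^ p) X - X - 1) := by
    have h := valGe_pow_prime_apply_sub hv2 hp hp0 hpv hb1pos hE hx1g σ1 hσ hσ1x1 hεg hσ1x2 hδg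
      hfix
    have heq : (σ1 ^ p) X - X - 1 = (σ1 ^ p) x2 - x2 - 1 := by
      rw [hX, map_sub, map_mul, hfix, hM, AlgEquiv.commutes]
      ring
    rwa [heq]
  have hu : 0 ≤ (p - 1) * b1 := by nlinarith
  have hs := hraise (σ1 ^ p) b2 hb2pos.le (by rw [hfix, sub_self]; exact ValGe.zero)
    (by simpa using (hsX.mono (by omega : (0 : ℤ) ≤ _)).add hv2 (ValGe.one hv2))
  -- the operators
  have h2 : ∀ n z, ValGe v2 n z → ValGe v2 (n + b2) (Ψ2 z) := by
    intro n z hz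
    rw [hΨ2]
    exact hs n z hz
  have hΨ1' : ∀ j : ℕ, j < p → ValGe v2 (-(j * b2) + p * b1 + 1) (Ψ1 (scaffoldMonomial x1 X 0 j)) ∧
      ∀ k : ℕ, ValGe v2 (-(j * b2) - k * (p * b1) + 1)
        (Ψ1 (scaffoldMonomial x1 X (k + 1) j) - (k + 1) * scaffoldMonomial x1 X k j) := by
    intro j hj
    rw [hΨ1, hΨ2]
    exact valGe_scaffold_apply_sub hv2 hp hb1pos hb2pos.le hx1g hXg σ1 (σ1 ^ p) hσ' hfix hσx hσX
      (valGe_truncated_pow_fallFact_sub hv2 hp hp1 hb1pos hmpos hb2 hMg (σ1 ^ p) hs hXg hsX hj)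
  have h1 : ∀ n z, ValGe v2 n z → ValGe v2 (n + p * b1) (Ψ1 z) := by
    intro n z hz
    refine valGe_map_of_val_distinct hv2 hram (fun s => (hmon _ _).1) hdist hcard (fun s => ?_) hz
    obtain ⟨⟨i, hi⟩, ⟨j, hj⟩⟩ := s
    simp only
    rw [(hmon _ _).2]
    rcases i with _ | k
    · exact (hΨ1' j hj).1.mono (by push_cast; linarith)
    · have := (((hΨ1' j hj).2 k).mono (by linarith : -(j * b2) - k * (p * b1) ≤ _)).add hv2
        (ValGe.natCast_mul hv2 (k + 1) (ValGe.of_le (hmon k j).2.ge) |>.mono (by linarith))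
      push_cast at this
      rw [sub_add_cancel] at this
      exact this.mono (by push_cast; linarith)
  have hΨ2x : ∀ i j : ℕ, Ψ2 (scaffoldMonomial x1 X i j) = x1 ^ i * Ψ2 (fallFact X j) := by
    intro i j
    simp only [hΨ2, scaffoldMonomial, LinearMap.sub_apply, Module.End.one_apply,
      AlgEquiv.toLinearMap_apply, map_mul, map_pow, hfix]
    ring
  have h2zero : ∀ i : ℕ, ValGe v2 (-(i * (p * b1)) + b2 + 1) (Ψ2 (scaffoldMonomial x1 X i 0)) := by
    intro i
    have : Ψ2 (scaffoldMonomial x1 X i 0) = 0 := by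
      rw [hΨ2x, hΨ2, fallFact_zero]
      simp
    rw [this]
    exact ValGe.zero
  have h2succ : ∀ i k : ℕ, ValGe v2 (-(i * (p * b1)) - k * b2 + 1)
      (Ψ2 (scaffoldMonomial x1 X i (k + 1)) - (k + 1) * scaffoldMonomial x1 X i k) := by
    intro i k
    have heq : Ψ2 (scaffoldMonomial x1 X i (k + 1)) - (k + 1) * scaffoldMonomial x1 X i k =
        x1 ^ i * (Ψ2 (fallFact X (k + 1)) - (k + 1) * fallFact X k) := by
      rw [hΨ2x, scaffoldMonomial]
      ring
    rw [heq, hΨ2]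
    refine ((hx1g.pow hv2 i).mul hv2
      (valGe_difference_fallFact_sub hv2 hb2pos.le (σ1 ^ p) (by omega) hXg hsX k)).mono ?_
    linarith
  -- the element `ρ`
  have hpsq : (0 : ℤ) < (p : ℤ) ^ 2 := by positivity
  have hπd : ∀ t : ℤ, algebraMap K0 K2 (π0 ^ t) ≠ 0 ∧
      v2 (algebraMap K0 K2 (π0 ^ t)) = (p : ℤ) ^ 2 * t := by
    intro t
    have h0 : π0 ^ t ≠ 0 := zpow_ne_zero t hπ0
    refine ⟨(map_ne_zero _).2 h0, ?_⟩
    rw [hram _ h0, hv0.map_zpow hπ0, hπ0v, mul_one]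
  have hd0 : d 0 = b2 / (p : ℤ) ^ 2 := by
    rw [hd 0 (by positivity), Int.fdiv_eq_ediv_of_nonneg _ hpsq.le]
    simp
  have hρne : ρ ≠ 0 := by
    rw [hρ]
    exact mul_ne_zero (hπd _).1 hρ0
  have hρv : v2 ρ = b2 := by
    rw [hρ, hv2.map_mul _ _ (hπd _).1 hρ0, (hπd _).2, hρ0v, hd0]
    exact Int.mul_ediv_add_emod b2 _
  have hpp : p - 1 < p := by omega
  obtain ⟨c, hc0, hcv, hcr⟩ := exists_leading_term (i0 := (⟨p - 1, hpp⟩, ⟨p - 1, hpp⟩)) hv2 hram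
    (fun s : Fin p × Fin p => (hmon _ _).1) hdist hcard hρne (by
      simp only
      rw [hρv, (hmon _ _).2, Nat.cast_sub hp.one_le, hb2]
      exact ⟨p * m + b1, by push_cast; ring⟩)
  simp only at hcv hcr
  have hval : ∀ i j : ℕ, i < p → j < p → (Ψ2 ^ j) ((Ψ1 ^ i) ρ) ≠ 0 ∧
      v2 ((Ψ2 ^ j) ((Ψ1 ^ i) ρ)) = b2 + j * b2 + i * (p * b1) := by
    intro i j hi hj
    have := val_pow_apply_pow_apply (φ1 := Ψ1) (φ2 := Ψ2) (c1 := p * b1) (c2 := b2) hv2 hp hp1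
      (fun i j => (hmon i j).1) (fun i j => (hmon i j).2.trans (by ring)) h1 h2
      (fun j hj => (hΨ1' j hj).1) (fun j hj => (hΨ1' j hj).2) h2zero h2succ hc0 hcv hcr hi hj
    rwa [hρv] at this
  -- the integral basis
  have hdigit : ∀ a : Fin (p ^ 2), (a : ℕ) % p < p ∧ (a : ℕ) / p < p := fun a =>
    ⟨Nat.mod_lt _ hp.pos, Nat.div_lt_of_lt_mul (by rw [← sq]; exact a.2)⟩
  have hρfv : ∀ a : Fin (p ^ 2), ρf a ≠ 0 ∧ v2 (ρf a) =
      ((1 + ((a / p : ℕ) : ℤ)) * b2 + ((a % p : ℕ) : ℤ) * (p : ℤ) * b1) % (p : ℤ) ^ 2 := by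
    intro a
    obtain ⟨hne, hv⟩ := hval _ _ (hdigit a).1 (hdigit a).2
    have hΨfa : Ψf a ρ = (Ψ2 ^ ((a : ℕ) / p)) ((Ψ1 ^ ((a : ℕ) % p)) ρ) := by
      rw [hΨf, if_pos a.2, Module.End.mul_apply]
    rw [hρf, hΨfa]
    refine ⟨mul_ne_zero (hπd _).1 hne, ?_⟩
    rw [hv2.map_mul _ _ (hπd _).1 hne, (hπd _).2, hv, hd a a.2,
      Int.fdiv_eq_ediv_of_nonneg _ hpsq.le, Int.emod_def]
    ring
  have hfdist : ∀ a a' : Fin (p ^ 2), (p : ℤ) ^ 2 ∣ v2 (ρf a) - v2 (ρf a') → a = a' := by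
    intro a a' h
    rw [(hρfv a).2, (hρfv a').2] at h
    have h' := Int.ModEq.dvd (Int.emod_emod_of_dvd _ dvd_rfl |>.symm.trans
      ((Int.modEq_iff_dvd.2 h).symm.trans (Int.emod_emod_of_dvd _ dvd_rfl)))
    have := eq_and_eq_of_sq_dvd hp hnd1 hb2 (hdigit a').1 (hdigit a').2 (hdigit a).1 (hdigit a).2
      (by
        convert h' using 1
        ring)
    refine Fin.ext ?_
    rw [← Nat.div_add_mod (a : ℕ) p, ← Nat.div_add_mod (a' : ℕ) p, this.1, this.2]
  have hfcard : Fintype.card (Fin (p ^ 2)) = Module.finrank K0 K2 := by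
    rw [hdeg, Fintype.card_fin]
  have hli : LinearIndependent K0 (fun a : Fin (p ^ 2) => ρf a) :=
    linearIndependent_of_val_distinct hv2 hram (fun a => (hρfv a).1) hfdist
  have hinteger := valGe_zero_iff_exists_integral_coeff hv2 hram (fun a => (hρfv a).1) hfdist hfcard
    (fun a => by
      rw [(hρfv a).2]
      exact ⟨Int.emod_nonneg _ hpsq.ne', Int.emod_lt_of_pos _ hpsq⟩)
  -- the group algebra
  obtain ⟨R, hR⟩ := exists_subalgebra_eq_span_aut K0 K2
  have hΨ2R : Ψ2 ∈ R := by
    rw [hΨ2]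
    refine R.sub_mem ?_ R.one_mem
    rw [← Subalgebra.mem_toSubmodule, hR]
    exact Submodule.subset_span ⟨σ1 ^ p, rfl⟩
  have hΨ1R : Ψ1 ∈ R := by
    rw [hΨ1]
    refine R.sub_mem (R.mul_mem ?_ (R.sum_mem fun i _ => R.smul_mem (R.pow_mem hΨ2R i) _)) R.one_mem
    rw [← Subalgebra.mem_toSubmodule, hR]
    exact Submodule.subset_span ⟨σ1, rfl⟩
  have hevli : LinearIndependent K0 (fun a : Fin (p ^ 2) => Ψf a ρ) := by
    convert hli.units_smul (fun a : Fin (p ^ 2) => (Units.mk0 π0 hπ0) ^ d a) using 1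
    funext a
    rw [Pi.smul_apply', hρf, Units.smul_def, Units.val_zpow_eq_zpow_val, Units.val_mk0,
      Algebra.smul_def, ← mul_assoc, ← map_mul, ← zpow_add₀ hπ0, add_neg_cancel, zpow_zero,
      map_one, one_mul]
  refine ⟨hli, hinteger, normalBasis_and_basis_span_aut hfcard (fun a => ?_) hevli⟩
  rw [← hR, Subalgebra.mem_toSubmodule, hΨf, if_pos a.2]
  exact R.mul_mem (R.pow_mem hΨ2R _) (R.pow_mem hΨ1R _)
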